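/- Let n ≥ 1 and for i ∈ {1,...,n} let A_{n,i} denote the number of monotone triangles of order n with bottom row (1,2,...,n) such that exactly i of the entries a_{1,1}, a_{2,1}, ..., a_{n,1} are equal to 1. Then for every i ∈ {1,...,n}: A_{n,i} = ∑_{k=1}^{n} binom(2n−1−i, k−i) · (−1)^{k+n} · A_{n,k}, where binom(m,j) = 0 whenever j < 0. -/

import Mathlib

/-- The Gelfand-Tsetlin condition: `a_{i+1,j} ≤ a_{i,j} ≤ a_{i+1,j+1}` for all entries
of the triangular array `(a_{i,j})_{1 ≤ j ≤ i ≤ n}`. -/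
def IsGT {n : ℕ} (a : ∀ i : Fin n, Fin (i.1 + 1) → ℤ) : Prop :=
  ∀ i : Fin n, ∀ hi : i.1 + 1 < n, ∀ j : Fin (i.1 + 1),
    a ⟨i.1 + 1, hi⟩ ⟨j.1, by have := j.isLt; show j.1 < i.1 + 1 + 1; omega⟩ ≤ a i j ∧
      a i j ≤ a ⟨i.1 + 1, hi⟩ ⟨j.1 + 1, by have := j.isLt; show j.1 + 1 < i.1 + 1 + 1; omega⟩

/-- Every row of the triangular array is strictly increasing. -/
def StrictRows {n : ℕ} (a : ∀ i : Fin n, Fin (i.1 + 1) → ℤ) : Prop :=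
  ∀ i : Fin n, ∀ j : Fin (i.1 + 1), ∀ h : j.1 + 1 < i.1 + 1, a i j < a i ⟨j.1 + 1, h⟩

/-- Every row except possibly the bottom row is strictly increasing. -/
def StrictRowsAboveBottom {n : ℕ} (a : ∀ i : Fin n, Fin (i.1 + 1) → ℤ) : Prop :=
  ∀ i : Fin n, i.1 + 1 < n →
    ∀ j : Fin (i.1 + 1), ∀ h : j.1 + 1 < i.1 + 1, a i j < a i ⟨j.1 + 1, h⟩

/-- The bottom row (row `n`) of a triangular array equals `k`. -/
def BottomRow {n : ℕ} (a : ∀ i : Fin n, Fin (i.1 + 1) → ℤ) (k : Fin n → ℤ) : Prop :=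
  ∀ i : Fin n, i.1 + 1 = n → ∀ j : Fin (i.1 + 1),
    a i j = k ⟨j.1, by have := j.isLt; omega⟩

/-- `A_{n,i}`: the number of monotone triangles of order `n` with bottom row
`(1, 2, …, n)` in which exactly `i` of the entries `a_{1,1}, a_{2,1}, …, a_{n,1}`
are equal to `1`. -/
noncomputable def Arefined (n : ℕ) (i : ℕ) : ℕ :=
  Nat.card {a : ∀ r : Fin n, Fin (r.1 + 1) → ℤ //
    IsGT a ∧ StrictRows a ∧
    (∀ r : Fin n, r.1 + 1 = n → ∀ j : Fin (r.1 + 1), a r j = (j.1 : ℤ) + 1) ∧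
    (Finset.univ.filter
      (fun r : Fin n => a r ⟨0, Nat.succ_pos r.1⟩ = 1)).card = i}



/-! ### Products over pairs -/

/-- product over pairs `p < q` -/
def pairProd {M : Type*} [CommMonoid M] {n : ℕ} (f : Fin n → Fin n → M) : M :=
  ∏ p, ∏ q, if p < q then f p q else 1

lemma pairProd_mul {M : Type*} [CommMonoid M] {n : ℕ} (f g : Fin n → Fin n → M) :
    pairProd (fun p q => f p q * g p q) = pairProd f * pairProd g := by
  unfold pairProd
  simp only [← Finset.prod_mul_distrib]
  refine Finset.prod_congr rfl fun p _ => Finset.prod_congr rfl fun q _ => ?_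
  split_ifs <;> simp

lemma pairProd_map {M N : Type*} [CommMonoid M] [CommMonoid N] (φ : M →* N) {n : ℕ}
    (f : Fin n → Fin n → M) :
    φ (pairProd f) = pairProd (fun p q => φ (f p q)) := by
  unfold pairProd
  rw [map_prod]
  refine Finset.prod_congr rfl fun p _ => ?_
  rw [map_prod]
  refine Finset.prod_congr rfl fun q _ => ?_
  split_ifs <;> simp

lemma pairProd_succAbove {M : Type*} [CommMonoid M] {n : ℕ} (m : Fin (n + 1))
    (f : Fin (n + 1) → Fin (n + 1) → M) :
    pairProd f = (∏ q : Fin n, if m < m.succAbove q then f m (m.succAbove q) else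
        f (m.succAbove q) m) *
      pairProd (fun p q => f (m.succAbove p) (m.succAbove q)) := by
  unfold pairProd
  rw [Fin.prod_univ_succAbove _ m, Fin.prod_univ_succAbove _ m]
  simp only [lt_self_iff_false, if_false, one_mul]
  have : ∀ p : Fin n, (∏ q, if m.succAbove p < q then f (m.succAbove p) q else 1)
      = (if m.succAbove p < m then f (m.succAbove p) m else 1) *
        ∏ q, if p < q then f (m.succAbove p) (m.succAbove q) else 1 := by
    intro p
    rw [Fin.prod_univ_succAbove _ m]
    simp only [Fin.succAbove_lt_succAbove_iff]
  simp only [this, Finset.prod_mul_distrib]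
  rw [← mul_assoc, ← Finset.prod_mul_distrib]
  congr 1
  refine Finset.prod_congr rfl fun q _ => ?_
  rcases lt_or_gt_of_ne (Fin.succAbove_ne m q) with h | h
  · simp [h, h.not_gt]
  · simp [h, h.not_gt]

lemma pairProd_succ {M : Type*} [CommMonoid M] {n : ℕ}
    (f : Fin (n + 1) → Fin (n + 1) → M) :
    pairProd f = (∏ q : Fin n, f 0 q.succ) * pairProd (fun p q => f p.succ q.succ) := by
  rw [pairProd_succAbove 0]
  simp

lemma pairProd_rev {M : Type*} [CommMonoid M] {n : ℕ} (f : Fin n → Fin n → M) :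
    pairProd f = pairProd (fun p q => f q.rev p.rev) := by
  unfold pairProd
  rw [Finset.prod_comm]
  rw [← Equiv.prod_comp Fin.revPerm]
  refine Finset.prod_congr rfl fun p _ => ?_
  rw [← Equiv.prod_comp Fin.revPerm]
  simp

lemma pairProd_swap {M : Type*} [CommMonoid M] {n : ℕ} (f : Fin n → Fin n → M) (i j : Fin n)
    (hij : i.1 + 1 = j.1) :
    pairProd (fun p q => f (Equiv.swap i j p) (Equiv.swap i j q)) * f i j
      = pairProd f * f j i := by
  have hne : i ≠ j := by intro h; rw [h] at hij; omega
  have key : ∀ a b : Fin n, ∀ c : M,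
      (∏ p, ∏ q, if p = a ∧ q = b then c else 1) = c := by
    intro a b c
    rw [Finset.prod_eq_single a, Finset.prod_eq_single b] <;> simp +contextual
  have h1 : pairProd (fun p q => f (Equiv.swap i j p) (Equiv.swap i j q)) =
      ∏ p, ∏ q, if Equiv.swap i j p < Equiv.swap i j q then f p q else 1 := by
    unfold pairProd
    rw [← Equiv.prod_comp (Equiv.swap i j)]
    refine Finset.prod_congr rfl fun p _ => ?_
    rw [← Equiv.prod_comp (Equiv.swap i j)]
    simp
  rw [h1]
  conv_lhs => rw [← key i j (f i j)]
  conv_rhs => rw [← key j i (f j i)]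
  unfold pairProd
  simp only [← Finset.prod_mul_distrib]
  refine Finset.prod_congr rfl fun p _ => Finset.prod_congr rfl fun q _ => ?_
  have hij' : i < j := by rw [Fin.lt_def]; omega
  by_cases h1 : p = i ∧ q = j
  · obtain ⟨rfl, rfl⟩ := h1
    simp [hij', hij'.not_gt, hne, hne.symm]
  by_cases h2 : p = j ∧ q = i
  · obtain ⟨rfl, rfl⟩ := h2
    simp [hij', hij'.not_gt, hne, hne.symm]
  simp only [h1, h2, if_false, mul_one]
  have : Equiv.swap i j p < Equiv.swap i j q ↔ p < q := by
    simp only [Equiv.swap_apply_def]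
    rw [Fin.ext_iff, Fin.ext_iff] at h1 h2
    rw [Fin.lt_def, Fin.lt_def]
    split_ifs with a b c d e f <;> simp only [Fin.ext_iff] at * <;> omega
  simp only [this]

lemma pairProd_const_pow {M : Type*} [CommMonoid M] : ∀ {n : ℕ} (x : Fin n → M),
    (∏ i, x i) * pairProd (fun p q => x p * x q) = (∏ i, x i) ^ n
  | 0, x => by simp [pairProd]
  | n + 1, x => by
    have ih := pairProd_const_pow (fun i : Fin n => x i.succ)
    rw [pairProd_succ, Fin.prod_univ_succ, Finset.prod_mul_distrib]
    simp only [Finset.prod_const, Finset.card_univ, Fintype.card_fin]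
    rw [mul_pow, pow_succ (∏ i : Fin n, x i.succ), ← ih, pow_succ]
    simp only [mul_comm, mul_left_comm, mul_assoc]


/-! ### The group ring of shift operators -/

abbrev GR (n : ℕ) := AddMonoidAlgebra ℤ (Fin n → ℤ)

noncomputable def mon {n : ℕ} (k : Fin n → ℤ) : GR n := AddMonoidAlgebra.single k 1

noncomputable def xv {n : ℕ} (i : Fin n) : GR n := mon (Pi.single i 1)

lemma mon_mul {n : ℕ} (k l : Fin n → ℤ) : mon k * mon l = mon (k + l) := by
  simp [mon, AddMonoidAlgebra.single_mul_single]

lemma mon_zero {n : ℕ} : mon (0 : Fin n → ℤ) = 1 := rfl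

noncomputable def Phi {n : ℕ} (f : (Fin n → ℤ) → ℤ) : GR n →+ ℤ :=
  (Finsupp.liftAddHom (fun k => AddMonoidHom.mulRight (f k))).comp
    (AddMonoidAlgebra.coeffAddEquiv (R := ℤ) (M := Fin n → ℤ)).toAddMonoidHom

lemma Phi_single {n : ℕ} (f : (Fin n → ℤ) → ℤ) (k : Fin n → ℤ) (c : ℤ) :
    Phi f (AddMonoidAlgebra.single k c) = c * f k := by
  change Finsupp.sum (Finsupp.single k c) (fun x y => y * f x) = _
  simp

lemma Phi_mon {n : ℕ} (f : (Fin n → ℤ) → ℤ) (k : Fin n → ℤ) : Phi f (mon k) = f k := by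
  simp [mon, Phi_single]

/-- two additive maps agreeing on monomials agree -/
lemma GR_hom_ext {n : ℕ} {A : Type*} [AddCommGroup A] {φ ψ : GR n →+ A}
    (h : ∀ k, φ (mon k) = ψ (mon k)) : φ = ψ := by
  apply AddMonoidAlgebra.addMonoidHom_ext
  intro k c
  have : (AddMonoidAlgebra.single k c : GR n) = c • mon k := by
    simp [mon]
  rw [this, map_zsmul, map_zsmul, h]

/-- the weight factor -/
def wt {S : Type*} [CommRing S] (a b : S) : S := 1 - a + a * b

noncomputable def PP (n : ℕ) : GR n := pairProd (fun p q => wt (xv p) (xv q))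

noncomputable def detf {n : ℕ} (r : ℤ → Fin n → ℤ) (k : Fin n → ℤ) : ℤ :=
  Matrix.detRowAlternating (fun i => r (k i))

noncomputable def rowV (n : ℕ) (k : ℤ) : Fin n → ℤ := fun j => Ring.choose k j.1
noncomputable def rowW (n : ℕ) (k : ℤ) : Fin n → ℤ := fun j => Ring.choose k (j.1 + 1)

noncomputable def FF (n : ℕ) (k : Fin n → ℤ) : ℤ := Phi (detf (rowV n)) (mon k * PP n)
noncomputable def GG (n : ℕ) (k : Fin n → ℤ) : ℤ := Phi (detf (rowW n)) (mon k * PP n)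

lemma Phi_diff_prod {n : ℕ} (r : ℤ → Fin n → ℤ) (T : Finset (Fin n)) :
    ∀ k : Fin n → ℤ, Phi (detf r) (mon k * ∏ i ∈ T, (xv i - 1)) =
    Matrix.detRowAlternating (T.piecewise (fun i => r (k i + 1) - r (k i)) (fun i => r (k i))) := by
  induction T using Finset.induction_on with
  | empty => intro k; simp [Phi_mon, detf]
  | insert a T ha ih =>
    intro k
    rw [Finset.prod_insert ha]
    have : mon k * ((xv a - 1) * ∏ i ∈ T, (xv i - 1)) =
      mon (k + Pi.single a 1) * ∏ i ∈ T, (xv i - 1) - mon k * ∏ i ∈ T, (xv i - 1) := by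
      rw [← mon_mul]; unfold xv; ring
    rw [this, map_sub, ih, ih]
    rw [Finset.piecewise_insert, AlternatingMap.map_update_sub]
    congr 2
    · funext i
      by_cases h : i = a
      · subst h; simp [ha]
      · by_cases h' : i ∈ T <;> simp [h, h']
    · funext i
      by_cases h : i = a
      · subst h; simp [ha]
      · by_cases h' : i ∈ T <;> simp [h, h']

lemma rowV_diff_zero (n : ℕ) (k : ℤ) : rowV (n+1) (k + 1) 0 - rowV (n+1) k 0 = 0 := by
  simp [rowV]

lemma rowV_diff_succ (n : ℕ) (k : ℤ) (j : Fin n) :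
    rowV (n+1) (k + 1) j.succ - rowV (n+1) k j.succ = rowV (n+1) k j.castSucc := by
  simp [rowV, Ring.choose_succ_succ]

lemma rowW_diff (n : ℕ) (k : ℤ) : rowW n (k + 1) - rowW n k = rowV n k := by
  funext j
  simp [rowV, rowW, Ring.choose_succ_succ]

lemma det_t {n : ℕ} (k : Fin n → ℤ) (t : ℤ) :
    Matrix.detRowAlternating (fun i => t • (rowV n (k i + 1) - rowV n (k i)) + rowV n (k i)) =
    Matrix.detRowAlternating (fun i => rowV n (k i)) := by
  cases n with
  | zero => congr 1; funext i; exact i.elim0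
  | succ n =>
    symm
    apply Matrix.det_eq_of_forall_col_eq_smul_add_pred (fun _ => -t)
    · intro i; simp [rowV_diff_zero]
    · intro i j
      have := rowV_diff_succ n (k i) j
      simp only [Pi.add_apply, Pi.smul_apply, Pi.sub_apply, this]
      simp

lemma esymm_zero {n : ℕ} (k : Fin n → ℤ) (j : ℕ) (hj : 1 ≤ j) :
    ∑ T ∈ Finset.powersetCard j (Finset.univ : Finset (Fin n)),
      Phi (detf (rowV n)) (mon k * ∏ i ∈ T, (xv i - 1)) = 0 := by
  simp only [Phi_diff_prod]
  set d : Finset (Fin n) → ℤ := fun T => Matrix.detRowAlternating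
    (T.piecewise (fun i => rowV n (k i + 1) - rowV n (k i)) (fun i => rowV n (k i))) with hd
  change ∑ T ∈ Finset.powersetCard j (Finset.univ : Finset (Fin n)), d T = 0
  have h1 : ∀ t : ℤ, ∑ T : Finset (Fin n), t ^ T.card * d T = d ∅ := by
    intro t
    have h := det_t k t
    have h2 : (fun i => t • (rowV n (k i + 1) - rowV n (k i)) + rowV n (k i)) =
      (fun i => t • (rowV n (k i + 1) - rowV n (k i))) + fun i => rowV n (k i) := rfl
    rw [h2] at h
    have h3 := MultilinearMap.map_add_univ
      (Matrix.detRowAlternating (n := Fin n) (R := ℤ)).toMultilinearMap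
      (fun i => t • (rowV n (k i + 1) - rowV n (k i))) (fun i => rowV n (k i))
    simp only [AlternatingMap.coe_multilinearMap] at h3
    rw [h] at h3
    have h4 : d ∅ = Matrix.detRowAlternating (fun i => rowV n (k i)) := by simp [hd]
    rw [h4, h3]
    refine Finset.sum_congr rfl fun T _ => ?_
    have h5 := MultilinearMap.map_piecewise_smul
      (Matrix.detRowAlternating (n := Fin n) (R := ℤ)).toMultilinearMap (fun _ => t)
      (T.piecewise (fun i => rowV n (k i + 1) - rowV n (k i)) (fun i => rowV n (k i))) T
    simp only [AlternatingMap.coe_multilinearMap, Finset.prod_const, smul_eq_mul] at h5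
    rw [hd]
    dsimp only
    rw [← h5]
    congr 1
    funext i
    by_cases h' : i ∈ T <;> simp [h']
  let p : Polynomial ℤ := ∑ T : Finset (Fin n), Polynomial.C (d T) * Polynomial.X ^ T.card
  have hp : p = Polynomial.C (d ∅) := by
    apply Polynomial.funext
    intro t
    rw [Polynomial.eval_C, ← h1 t]
    simp only [p, Polynomial.eval_finsetSum, Polynomial.eval_mul, Polynomial.eval_C,
      Polynomial.eval_pow, Polynomial.eval_X]
    exact Finset.sum_congr rfl fun T _ => mul_comm _ _
  have hc := congrArg (fun q => Polynomial.coeff q j) hp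
  simp only [p, Polynomial.finsetSum_coeff, Polynomial.coeff_C_mul_X_pow, Polynomial.coeff_C] at hc
  rw [if_neg (by omega), ← Finset.sum_filter] at hc
  rw [← hc]
  refine Finset.sum_congr ?_ fun _ _ => rfl
  ext T
  simp [Finset.mem_powersetCard, eq_comm]

/-- the annihilator ideal -/
noncomputable def JJ (n : ℕ) : Ideal (GR n) where
  carrier := {P | ∀ Q, Phi (detf (rowV n)) (Q * P) = 0}
  add_mem' := by
    intro a b ha hb Q
    rw [mul_add, map_add, ha, hb, add_zero]
  zero_mem' := by intro Q; simp
  smul_mem' := by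
    intro c x hx Q
    rw [smul_eq_mul, ← mul_assoc]
    exact hx _

lemma esymm_mem {n : ℕ} (j : ℕ) (hj : 1 ≤ j) :
    ∑ T ∈ Finset.powersetCard j (Finset.univ : Finset (Fin n)), ∏ i ∈ T, (xv i - 1) ∈ JJ n := by
  intro Q
  set e := ∑ T ∈ Finset.powersetCard j (Finset.univ : Finset (Fin n)), ∏ i ∈ T, (xv i - 1)
  have : (Phi (detf (rowV n))).comp (AddMonoidHom.mulRight e) = 0 := by
    apply GR_hom_ext
    intro k
    simp only [AddMonoidHom.comp_apply, AddMonoidHom.coe_mulRight, AddMonoidHom.zero_apply]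
    rw [Finset.mul_sum, map_sum]
    exact esymm_zero k j hj
  exact DFunLike.congr_fun this Q

lemma JJ_prod_mem {n : ℕ} (a b : GR n) :
    ∏ i : Fin n, (b * (xv i - 1) + a) - a ^ n ∈ JJ n := by
  rw [Finset.prod_add, Finset.sum_powerset, Finset.card_univ, Fintype.card_fin,
    Finset.sum_range_succ']
  simp only [Finset.powersetCard_zero, Finset.sum_singleton, Finset.prod_empty, one_mul,
    Finset.sdiff_empty, Finset.prod_const, Finset.card_univ, Fintype.card_fin, add_sub_cancel_right]
  refine Ideal.sum_mem _ fun j _ => ?_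
  have : ∑ t ∈ Finset.powersetCard (j + 1) (Finset.univ : Finset (Fin n)),
      (∏ i ∈ t, b * (xv i - 1)) * a ^ (Finset.univ \ t).card =
      (b ^ (j+1) * a ^ (n - (j+1))) *
      ∑ T ∈ Finset.powersetCard (j+1) (Finset.univ : Finset (Fin n)), ∏ i ∈ T, (xv i - 1) := by
    rw [Finset.mul_sum]
    refine Finset.sum_congr rfl fun T hT => ?_
    rw [Finset.mem_powersetCard] at hT
    rw [Finset.prod_mul_distrib, Finset.prod_const, Finset.card_univ_sdiff, hT.2, Fintype.card_fin]
    ring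
  rw [this]
  exact Ideal.mul_mem_left _ _ (esymm_mem _ (by omega))


/-! ### Symmetry of `FF` -/

lemma abs_sym {S : Type*} [CommRing S] {m : ℕ} (x y : Fin (m + 1) → S) (hxy : ∀ i, x i * y i = 1)
    (h : ∀ a b : S, ∏ i, (b * (x i - 1) + a) = a ^ (m + 1)) :
    pairProd (fun p q => wt ((Fin.cons (y 0) (fun i : Fin m => y i.rev.succ) : Fin (m+1) → S) p)
      ((Fin.cons (y 0) (fun i : Fin m => y i.rev.succ) : Fin (m+1) → S) q)) =
    x 0 ^ (m + 1) * pairProd (fun p q => wt (x p) (x q)) := by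
  rw [pairProd_succ, pairProd_succ (fun p q => wt (x p) (x q))]
  simp only [Fin.cons_zero, Fin.cons_succ]
  set X := ∏ i : Fin m, x i.succ with hX
  have h1 : x 0 * X = 1 := by
    have := h 1 1
    simpa [Fin.prod_univ_succ] using this
  set Q := pairProd (fun p q : Fin m => x p.succ * x q.succ) with hQ
  have h2 : X * Q = X ^ m := pairProd_const_pow (fun i : Fin m => x i.succ)
  have hrev : ∏ q : Fin m, wt (y 0) (y q.rev.succ) = ∏ q : Fin m, wt (y 0) (y q.succ) :=
    Equiv.prod_comp Fin.revPerm (fun q : Fin m => wt (y 0) (y q.succ))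
  have h3 : x 0 ^ m * X * ∏ q : Fin m, wt (y 0) (y q.rev.succ) =
      ∏ q : Fin m, wt (x q.succ) (x 0) := by
    rw [hrev]
    have : x 0 ^ m = ∏ _q : Fin m, x 0 := by simp
    rw [this, hX, ← Finset.prod_mul_distrib, ← Finset.prod_mul_distrib]
    refine Finset.prod_congr rfl fun q _ => ?_
    have a := hxy 0
    have b := hxy q.succ
    unfold wt
    linear_combination (x q.succ * y q.succ - x q.succ) * a + b
  have h4 : Q * pairProd (fun p q : Fin m => wt (y p.rev.succ) (y q.rev.succ)) =
      pairProd (fun p q : Fin m => wt (x p.succ) (x q.succ)) := by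
    rw [pairProd_rev (fun p q : Fin m => wt (y p.rev.succ) (y q.rev.succ)), hQ, ← pairProd_mul]
    congr 1
    funext p q
    simp only [Fin.rev_rev]
    have a := hxy p.succ
    have b := hxy q.succ
    unfold wt
    linear_combination (x q.succ * y q.succ - 0) * a + b - x p.succ * b
  have h5 : (1 + (x 0 - 1) + (x 0 - 1) ^ 2) * ∏ q : Fin m, wt (x 0) (x q.succ) = 1 := by
    have := h 1 (x 0)
    rw [Fin.prod_univ_succ, one_pow] at this
    refine Eq.trans ?_ this
    congr 1
    · ring
    · refine Finset.prod_congr rfl fun q _ => ?_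
      unfold wt; ring
  have h6 : (1 + (x 0 - 1) + (x 0 - 1) ^ 2) * ∏ q : Fin m, wt (x q.succ) (x 0) =
      x 0 ^ (m + 1) := by
    rw [← h (x 0) (x 0 - 1)]
    rw [Fin.prod_univ_succ]
    congr 1
    · ring
    · refine Finset.prod_congr rfl fun q _ => ?_
      unfold wt; ring
  have h7 : ∏ q : Fin m, wt (x q.succ) (x 0) =
      x 0 ^ (m + 1) * ∏ q : Fin m, wt (x 0) (x q.succ) := by
    linear_combination (∏ q : Fin m, wt (x 0) (x q.succ)) * h6
      - (∏ q : Fin m, wt (x q.succ) (x 0)) * h5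
  have h8 : x 0 ^ m * X * Q = 1 := by
    rw [mul_assoc, h2, ← mul_pow, h1, one_pow]
  rw [← mul_assoc, ← h7, ← h3, ← h4]
  linear_combination (- (∏ q : Fin m, wt (y 0) (y q.rev.succ)) *
    pairProd (fun p q : Fin m => wt (y p.rev.succ) (y q.rev.succ))) * h8

/-- the reflection on exponents -/
def rho (m : ℕ) : (Fin (m + 1) → ℤ) →+ (Fin (m + 1) → ℤ) where
  toFun k := Fin.cons (-k 0) (fun i : Fin m => -k i.rev.succ)
  map_zero' := by
    funext i
    refine Fin.cases ?_ (fun i => ?_) i <;> simp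
  map_add' := by
    intro a b
    funext i
    refine Fin.cases ?_ (fun i => ?_) i <;> simp <;> ring

lemma rho_apply (m : ℕ) (k : Fin (m + 1) → ℤ) :
    rho m k = Fin.cons (-k 0) (fun i : Fin m => -k i.rev.succ) := rfl

lemma detf_rowV_vandermonde (n : ℕ) (k : Fin n → ℤ) :
    (∏ j : Fin n, (j.1.factorial : ℤ)) * detf (rowV n) k = pairProd (fun p q => k q - k p) := by
  have h := Matrix.det_eval_matrixOfPolynomials_eq_det_vandermonde k
    (fun j => descPochhammer ℤ j.1) (fun i => descPochhammer_natDegree ℤ i.1)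
    (fun i => monic_descPochhammer ℤ i.1)
  rw [Matrix.det_vandermonde] at h
  have h2 : pairProd (fun p q => k q - k p) = ∏ i : Fin n, ∏ j ∈ Finset.Ioi i, (k j - k i) := by
    unfold pairProd
    refine Finset.prod_congr rfl fun p _ => ?_
    rw [← Finset.prod_filter]
    refine Finset.prod_congr ?_ fun _ _ => rfl
    ext; simp
  rw [h2, h]
  have h3 := Matrix.det_mul_row (fun j : Fin n => (j.1.factorial : ℤ))
    (Matrix.of fun i => rowV n (k i))
  have h4 : detf (rowV n) k = Matrix.det (Matrix.of fun i => rowV n (k i)) := rfl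
  rw [h4, ← h3]
  congr 1
  ext i j
  simp only [Matrix.of_apply, rowV]
  have := Ring.descPochhammer_eq_factorial_smul_choose (k i) j.1
  rw [nsmul_eq_mul] at this
  rw [← this, Polynomial.eval_eq_smeval]

lemma detf_rho (m : ℕ) (k : Fin (m + 1) → ℤ) :
    detf (rowV (m + 1)) (rho m k) = (-1) ^ m * detf (rowV (m + 1)) k := by
  have hne : (∏ j : Fin (m + 1), (j.1.factorial : ℤ)) ≠ 0 := by
    rw [Finset.prod_ne_zero_iff]
    intro j _
    exact_mod_cast Nat.factorial_ne_zero _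
  apply mul_left_cancel₀ hne
  rw [detf_rowV_vandermonde, mul_left_comm, detf_rowV_vandermonde, pairProd_succ, pairProd_succ]
  simp only [rho_apply, Fin.cons_zero, Fin.cons_succ]
  rw [pairProd_rev (fun p q : Fin m => k q.succ - k p.succ), ← mul_assoc]
  congr 1
  · have : (-1 : ℤ) ^ m = ∏ _q : Fin m, (-1 : ℤ) := by simp
    rw [this, ← Equiv.prod_comp Fin.revPerm (fun q : Fin m => (k q.succ - k 0)),
      ← Finset.prod_mul_distrib]
    refine Finset.prod_congr rfl fun q _ => ?_
    simp; ring
  · congr 1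
    funext p q
    ring

lemma mon_single_mul_neg {n : ℕ} (i : Fin n) : xv i * mon (-Pi.single i 1) = 1 := by
  unfold xv
  rw [mon_mul, add_neg_cancel, mon_zero]

noncomputable def rhoHat (m : ℕ) : GR (m + 1) →+* GR (m + 1) :=
  AddMonoidAlgebra.mapDomainRingHom ℤ (rho m)

lemma rhoHat_mon (m : ℕ) (k : Fin (m + 1) → ℤ) : rhoHat m (mon k) = mon (rho m k) := by
  simp [rhoHat, mon]

lemma Phi_rhoHat (m : ℕ) (Q : GR (m + 1)) :
    Phi (detf (rowV (m + 1))) (rhoHat m Q) = (-1) ^ m * Phi (detf (rowV (m + 1))) Q := by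
  have : (Phi (detf (rowV (m + 1)))).comp (rhoHat m).toAddMonoidHom =
      (AddMonoidHom.mulLeft ((-1) ^ m)).comp (Phi (detf (rowV (m + 1)))) := by
    apply GR_hom_ext
    intro k
    simp only [AddMonoidHom.comp_apply, AddMonoidHom.coe_mulLeft]
    change Phi _ (rhoHat m (mon k)) = _
    rw [rhoHat_mon, Phi_mon, Phi_mon, detf_rho]
  exact DFunLike.congr_fun this Q

lemma rhoHat_xv (m : ℕ) (j : Fin (m + 1)) : rhoHat m (xv j) =
    (Fin.cons (mon (-Pi.single 0 1)) (fun i : Fin m => mon (-Pi.single i.rev.succ 1)) :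
      Fin (m + 1) → GR (m + 1)) j := by
  unfold xv
  rw [rhoHat_mon]
  refine Fin.cases ?_ (fun j => ?_) j
  · simp only [Fin.cons_zero]
    congr 1
    funext i
    refine Fin.cases ?_ (fun i => ?_) i
    · simp [rho_apply]
    · simp [rho_apply]
  · simp only [Fin.cons_succ]
    congr 1
    funext i
    refine Fin.cases ?_ (fun i => ?_) i
    · simp [rho_apply]
    · simp only [rho_apply, Fin.cons_succ, Pi.neg_apply]
      congr 1
      simp only [Pi.single_apply, Fin.succ_inj]
      congr 1
      rw [eq_iff_iff]
      constructor
      · rintro rfl; simp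
      · rintro rfl; simp

lemma wt_map {S T : Type*} [CommRing S] [CommRing T] (φ : S →+* T) (a b : S) :
    φ (wt a b) = wt (φ a) (φ b) := by simp [wt]

lemma PP_sym (m : ℕ) : rhoHat m (PP (m + 1)) - xv 0 ^ (m + 1) * PP (m + 1) ∈ JJ (m + 1) := by
  rw [← Ideal.Quotient.eq]
  set π := Ideal.Quotient.mk (JJ (m + 1)) with hπ
  have key := abs_sym (fun i => π (xv i)) (fun i => π (mon (-Pi.single i 1)))
    (fun i => by rw [← map_mul, mon_single_mul_neg, map_one])
    (by
      intro a b
      obtain ⟨a, rfl⟩ := Ideal.Quotient.mk_surjective a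
      obtain ⟨b, rfl⟩ := Ideal.Quotient.mk_surjective b
      have := Ideal.Quotient.eq.2 (JJ_prod_mem a b)
      rw [map_prod, map_pow] at this
      rw [← this]
      simp [hπ])
  rw [map_mul, map_pow]
  have e1 : π (PP (m + 1)) = pairProd (fun p q => wt (π (xv p)) (π (xv q))) := by
    unfold PP
    have := pairProd_map π.toMonoidHom (fun p q : Fin (m+1) => wt (xv p) (xv q))
    simp only [RingHom.toMonoidHom_eq_coe, MonoidHom.coe_coe, wt_map] at this
    exact this
  have e2 : π (rhoHat m (PP (m + 1))) =
      pairProd (fun p q => wt (π (rhoHat m (xv p))) (π (rhoHat m (xv q)))) := by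
    unfold PP
    have := pairProd_map (π.comp (rhoHat m)).toMonoidHom
      (fun p q : Fin (m+1) => wt (xv p) (xv q))
    simp only [RingHom.toMonoidHom_eq_coe, MonoidHom.coe_coe, wt_map, RingHom.comp_apply] at this
    exact this
  rw [e1, e2, ← key]
  congr 1
  have : ∀ p, π (rhoHat m (xv p)) = (Fin.cons (π (mon (-Pi.single 0 1)))
      (fun i : Fin m => π (mon (-Pi.single i.rev.succ 1))) : Fin (m + 1) → _) p := by
    intro p
    rw [rhoHat_xv]
    refine Fin.cases ?_ (fun j => ?_) p <;> simp
  funext p q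
  rw [this, this]

lemma xv_pow {n : ℕ} (i : Fin n) (m : ℕ) : xv i ^ m = mon (Pi.single i (m : ℤ)) := by
  induction m with
  | zero => simp [mon_zero]
  | succ m ih =>
    rw [pow_succ, ih, xv, mon_mul, ← Pi.single_add]; simp

theorem FF_refl (m : ℕ) (k : Fin (m + 1) → ℤ) :
    FF (m + 1) (rho m k + Pi.single 0 ((m : ℤ) + 1)) = (-1) ^ m * FF (m + 1) k := by
  unfold FF
  rw [← Phi_rhoHat, map_mul (rhoHat m), rhoHat_mon]
  have h := PP_sym m (mon (rho m k))
  rw [mul_sub, map_sub, sub_eq_zero] at h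
  rw [h, ← mon_mul, ← mul_assoc, xv_pow]
  simp

lemma FF_shift_one (n : ℕ) (k : Fin n → ℤ) : FF n (k + fun _ => 1) = FF n k := by
  unfold FF
  have h := JJ_prod_mem (n := n) 1 1
  have e : ∏ i : Fin n, ((1 : GR n) * (xv i - 1) + 1) = mon (fun _ => 1) := by
    simp only [one_mul, sub_add_cancel]
    have : ∀ s : Finset (Fin n), ∏ i ∈ s, xv i = mon (∑ i ∈ s, Pi.single i (1 : ℤ)) := by
      intro s
      induction s using Finset.induction_on with
      | empty => simp [mon_zero]
      | insert a s ha ih => rw [Finset.prod_insert ha, Finset.sum_insert ha, ih, xv, mon_mul]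
    rw [this]
    congr 1
    exact Finset.univ_sum_single (fun _ : Fin n => (1 : ℤ))
  rw [e, one_pow] at h
  have := h (mon k * PP n)
  rw [mul_sub, map_sub, sub_eq_zero, mul_one] at this
  rw [← this, ← mon_mul]
  congr 1
  ring

lemma FF_shift (n : ℕ) (k : Fin n → ℤ) (c : ℕ) : FF n (k + fun _ => (c : ℤ)) = FF n k := by
  induction c with
  | zero => congr 1; funext i; simp
  | succ c ih =>
    rw [← ih, ← FF_shift_one n (k + fun _ => (c : ℤ))]
    congr 1; funext i; simp; ring

/-- functional equation -/
theorem FF_functional (m : ℕ) (x : ℤ) :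
    FF (m + 1) (Fin.cons (2 * m + 4 - x) (fun i : Fin m => (i.1 : ℤ) + 2)) =
    (-1) ^ m * FF (m + 1) (Fin.cons x (fun i : Fin m => (i.1 : ℤ) + 2)) := by
  rw [← FF_refl, ← FF_shift _ (_ + _) (m + 3)]
  congr 1
  funext i
  refine Fin.cases ?_ (fun j => ?_) i
  · simp [rho_apply]
    ring
  · have := j.isLt
    simp [rho_apply, Fin.val_rev]
    ring


/-! ### The summation recursion -/

def Hs (n : ℕ) (G : (Fin n → ℤ) → ℤ) (k : Fin (n + 1) → ℤ) : ℤ :=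
  ∑ m : Fin (n + 1), (-1) ^ m.1 *
    G (fun i : Fin n => if i.castSucc < m then k i.castSucc else k i.succ + 1)

lemma Hs_zero (G : (Fin 0 → ℤ) → ℤ) (k : Fin 1 → ℤ) (l : Fin 0 → ℤ) : Hs 0 G k = G l := by
  simp [Hs]
  congr 1
  exact Subsingleton.elim _ _

lemma Hs_succ (n : ℕ) (G : (Fin (n + 1) → ℤ) → ℤ) (a : ℤ) (k : Fin (n + 1) → ℤ) :
    Hs (n + 1) G (Fin.cons a k) =
      G (fun i => k i + 1) - Hs n (fun l => G (Fin.cons a l)) k := by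
  unfold Hs
  rw [Fin.sum_univ_succ, sub_eq_add_neg, ← Finset.sum_neg_distrib]
  congr 1
  · simp
  · refine Finset.sum_congr rfl fun m _ => ?_
    rw [Fin.val_succ, pow_succ]
    have : (fun i : Fin (n + 1) => if i.castSucc < m.succ then
        (Fin.cons a k : Fin (n + 2) → ℤ) i.castSucc else
        (Fin.cons a k : Fin (n + 2) → ℤ) i.succ + 1) =
        Fin.cons a (fun i : Fin n => if i.castSucc < m then k i.castSucc else k i.succ + 1) := by
      funext i
      refine Fin.cases ?_ (fun i => ?_) i
      · simp
      · simp only [Fin.cons_succ, ← Fin.succ_castSucc, Fin.succ_lt_succ_iff]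
    rw [this]
    ring

lemma Hs_sub (n : ℕ) (G G' : (Fin n → ℤ) → ℤ) (k : Fin (n + 1) → ℤ) :
    Hs n (fun l => G l - G' l) k = Hs n G k - Hs n G' k := by
  simp only [Hs, mul_sub, Finset.sum_sub_distrib]

lemma Hs_add (n : ℕ) (G G' : (Fin n → ℤ) → ℤ) (k : Fin (n + 1) → ℤ) :
    Hs n (fun l => G l + G' l) k = Hs n G k + Hs n G' k := by
  simp only [Hs, mul_add, Finset.sum_add_distrib]

/-- deleting a coordinate -/
def delHom {n : ℕ} (m : Fin (n + 1)) : (Fin (n + 1) → ℤ) →+ (Fin n → ℤ) where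
  toFun k := fun i => k (m.succAbove i)
  map_zero' := rfl
  map_add' _ _ := rfl

noncomputable def delHat {n : ℕ} (m : Fin (n + 1)) : GR (n + 1) →+* GR n :=
  AddMonoidAlgebra.mapDomainRingHom ℤ (delHom m)

lemma delHat_mon {n : ℕ} (m : Fin (n + 1)) (k : Fin (n + 1) → ℤ) :
    delHat m (mon k) = mon (fun i => k (m.succAbove i)) := by
  simp [delHat, mon, delHom]

lemma detf_expand (n : ℕ) (k : Fin (n + 1) → ℤ) :
    detf (rowV (n + 1)) k = ∑ m : Fin (n + 1), (-1) ^ m.1 *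
      detf (rowW n) (fun i => k (m.succAbove i)) := by
  have h := Matrix.det_succ_column_zero (Matrix.of fun i => rowV (n + 1) (k i))
  have h4 : detf (rowV (n + 1)) k = Matrix.det (Matrix.of fun i => rowV (n + 1) (k i)) := rfl
  rw [h4, h]
  refine Finset.sum_congr rfl fun m _ => ?_
  simp only [Matrix.of_apply]
  have : rowV (n + 1) (k m) 0 = 1 := by simp [rowV]
  rw [this, mul_one]
  congr 1

lemma Phi_expand (n : ℕ) (Q : GR (n + 1)) :
    Phi (detf (rowV (n + 1))) Q = ∑ m : Fin (n + 1), (-1) ^ m.1 *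
      Phi (detf (rowW n)) (delHat m Q) := by
  have : Phi (detf (rowV (n + 1))) = ∑ m : Fin (n + 1), (AddMonoidHom.mulLeft ((-1) ^ m.1)).comp
      ((Phi (detf (rowW n))).comp (delHat m).toAddMonoidHom) := by
    apply GR_hom_ext
    intro k
    rw [Phi_mon, detf_expand, AddMonoidHom.finsetSum_apply]
    refine Finset.sum_congr rfl fun m _ => ?_
    simp only [AddMonoidHom.comp_apply, AddMonoidHom.coe_mulLeft]
    change _ = _ * Phi _ (delHat m (mon k))
    rw [delHat_mon, Phi_mon]
  rw [this, AddMonoidHom.finsetSum_apply]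
  rfl

lemma delHat_xv_self {n : ℕ} (m : Fin (n + 1)) : delHat m (xv m) = 1 := by
  rw [xv, delHat_mon, ← mon_zero]
  congr 1
  funext i
  simp [Fin.succAbove_ne]

lemma delHat_xv_succAbove {n : ℕ} (m : Fin (n + 1)) (i : Fin n) :
    delHat m (xv (m.succAbove i)) = xv i := by
  rw [xv, delHat_mon, xv]
  congr 1
  funext j
  simp [Pi.single_apply]

lemma prod_ite_xv {n : ℕ} (s : Fin n → Prop) [DecidablePred s] :
    ∏ i, (if s i then xv i else 1) = mon (fun i => if s i then 1 else 0) := by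
  have : ∀ t : Finset (Fin n), ∏ i ∈ t, (if s i then xv i else 1) =
      mon (∑ i ∈ t, Pi.single i (if s i then (1 : ℤ) else 0)) := by
    intro t
    induction t using Finset.induction_on with
    | empty => simp [mon_zero]
    | insert a t ha ih =>
      rw [Finset.prod_insert ha, Finset.sum_insert ha, ih, ← mon_mul]
      congr 1
      split_ifs
      · rfl
      · rw [Pi.single_zero, mon_zero]
  rw [this]
  congr 1
  exact Finset.univ_sum_single _

lemma delHat_PP {n : ℕ} (m : Fin (n + 1)) :
    delHat m (PP (n + 1)) = mon (fun i : Fin n => if m < m.succAbove i then 1 else 0) * PP n := by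
  have h := pairProd_map (delHat m).toMonoidHom (fun p q : Fin (n+1) => wt (xv p) (xv q))
  simp only [RingHom.toMonoidHom_eq_coe, MonoidHom.coe_coe, wt_map] at h
  unfold PP
  rw [h, pairProd_succAbove m, ← prod_ite_xv]
  simp only [delHat_xv_self, delHat_xv_succAbove]
  congr 1
  refine Finset.prod_congr rfl fun q _ => ?_
  split_ifs <;> simp [wt]

theorem FF_eq_Hs (n : ℕ) (k : Fin (n + 1) → ℤ) : FF (n + 1) k = Hs n (GG n) k := by
  unfold FF Hs GG
  rw [Phi_expand]
  refine Finset.sum_congr rfl fun m _ => ?_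
  rw [map_mul (delHat m), delHat_mon, delHat_PP, ← mul_assoc, mon_mul]
  congr 4
  funext i
  simp only [Pi.add_apply]
  rcases lt_or_ge i.castSucc m with h | h
  · rw [Fin.succAbove_of_castSucc_lt _ _ h]
    simp [h, h.not_gt]
  · rw [Fin.succAbove_of_le_castSucc _ _ h]
    have : m < i.succ := lt_of_le_of_lt h (Fin.castSucc_lt_succ)
    simp [h.not_gt, this]

/-- vanishing property -/
def ZP (n : ℕ) (G : (Fin n → ℤ) → ℤ) : Prop :=
  ∀ i j : Fin n, i.1 + 1 = j.1 → ∀ l : Fin n → ℤ, l i = l j →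
    G l + G (l + Pi.single i 1 + Pi.single j 1) = G (l + Pi.single j 1)

def permHom {n : ℕ} (σ : Equiv.Perm (Fin n)) : (Fin n → ℤ) →+ (Fin n → ℤ) where
  toFun k := fun i => k (σ i)
  map_zero' := rfl
  map_add' _ _ := rfl

noncomputable def permHat {n : ℕ} (σ : Equiv.Perm (Fin n)) : GR n →+* GR n :=
  AddMonoidAlgebra.mapDomainRingHom ℤ (permHom σ)

lemma permHat_mon {n : ℕ} (σ : Equiv.Perm (Fin n)) (k : Fin n → ℤ) :
    permHat σ (mon k) = mon (fun i => k (σ i)) := by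
  simp [permHat, mon, permHom]

lemma Phi_swap {n : ℕ} (r : ℤ → Fin n → ℤ) (i j : Fin n) (hij : i ≠ j) (Q : GR n) :
    Phi (detf r) (permHat (Equiv.swap i j) Q) = - Phi (detf r) Q := by
  have : (Phi (detf r)).comp (permHat (Equiv.swap i j)).toAddMonoidHom = - Phi (detf r) := by
    apply GR_hom_ext
    intro k
    rw [AddMonoidHom.neg_apply]
    change Phi _ (permHat _ (mon k)) = _
    rw [permHat_mon, Phi_mon, Phi_mon]
    exact AlternatingMap.map_swap Matrix.detRowAlternating (fun a => r (k a)) hij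
  exact DFunLike.congr_fun this Q

lemma permHat_xv {n : ℕ} (i j a : Fin n) :
    permHat (Equiv.swap i j) (xv a) = xv (Equiv.swap i j a) := by
  rw [xv, permHat_mon, xv]
  congr 1
  funext b
  simp only [Pi.single_apply]
  congr 1
  rw [eq_iff_iff, Equiv.swap_apply_eq_iff]

theorem ZP_GG (n : ℕ) : ZP n (GG n) := by
  intro i j hij l hl
  have hne : i ≠ j := by intro h; rw [h] at hij; omega
  set Q := mon l * (PP n * wt (xv j) (xv i)) with hQ
  have h1 : permHat (Equiv.swap i j) Q = Q := by
    rw [hQ, map_mul, map_mul, permHat_mon, wt_map, permHat_xv, permHat_xv,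
      Equiv.swap_apply_left, Equiv.swap_apply_right]
    congr 1
    · congr 1
      funext a
      rw [Equiv.swap_apply_def]
      split_ifs with h h'
      · rw [h, hl]
      · rw [h', hl]
      · rfl
    · have h := pairProd_map (permHat (Equiv.swap i j)).toMonoidHom
        (fun p q : Fin n => wt (xv p) (xv q))
      simp only [RingHom.toMonoidHom_eq_coe, MonoidHom.coe_coe, wt_map, permHat_xv] at h
      unfold PP
      rw [h]
      exact pairProd_swap (fun p q : Fin n => wt (xv p) (xv q)) i j hij
  have h2 := Phi_swap (rowW n) i j hne Q
  rw [h1] at h2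
  have h3 : Phi (detf (rowW n)) Q = 0 := by omega
  have h4 : Q = mon l * PP n - mon (l + Pi.single j 1) * PP n +
      mon (l + Pi.single i 1 + Pi.single j 1) * PP n := by
    rw [hQ, ← mon_mul, ← mon_mul, ← mon_mul]
    unfold wt xv
    ring
  rw [h4, map_add, map_sub] at h3
  unfold GG
  linarith

def Dall : (n : ℕ) → ((Fin n → ℤ) → ℤ) → (Fin n → ℤ) → ℤ
  | 0, G, l => G l
  | n + 1, G, l => Dall n (fun l' => G (Fin.cons (l 0 + 1) l') - G (Fin.cons (l 0) l')) (Fin.tail l)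

lemma Dall_add : ∀ (n : ℕ) (G G' : (Fin n → ℤ) → ℤ) (l : Fin n → ℤ),
    Dall n (fun l => G l + G' l) l = Dall n G l + Dall n G' l
  | 0, G, G', l => rfl
  | n + 1, G, G', l => by
    simp only [Dall]
    rw [← Dall_add n]
    congr 1
    funext l'
    ring

lemma Dall_smul : ∀ (n : ℕ) (c : ℤ) (G : (Fin n → ℤ) → ℤ) (l : Fin n → ℤ),
    Dall n (fun l => c * G l) l = c * Dall n G l
  | 0, c, G, l => rfl
  | n + 1, c, G, l => by
    simp only [Dall]
    rw [← Dall_smul n]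
    congr 1
    funext l'
    ring

lemma cons_add_cons {n : ℕ} (a b : ℤ) (l m : Fin n → ℤ) :
    (Fin.cons a l : Fin (n + 1) → ℤ) + Fin.cons b m = Fin.cons (a + b) (l + m) := by
  funext i
  refine Fin.cases ?_ (fun i => ?_) i <;> simp

lemma Dall_shift : ∀ (n : ℕ) (d : Fin n → ℤ) (G : (Fin n → ℤ) → ℤ) (l : Fin n → ℤ),
    Dall n (fun l => G (l + d)) l = Dall n G (l + d)
  | 0, d, G, l => rfl
  | n + 1, d, G, l => by
    simp only [Dall]
    have : Fin.tail (l + d) = Fin.tail l + Fin.tail d := rfl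
    rw [this, ← Dall_shift n]
    congr 1
    funext l'
    conv_lhs => rw [← Fin.cons_self_tail d]
    rw [cons_add_cons, cons_add_cons]
    simp only [Fin.cons_zero, Pi.add_apply]
    congr 3
    ring

lemma Dall_Phi {n : ℕ} (f : (Fin n → ℤ) → ℤ) (P : GR n) (l : Fin n → ℤ) :
    Dall n (fun l => Phi f (mon l * P)) l = Phi (Dall n f) (mon l * P) := by
  induction P using AddMonoidAlgebra.induction_linear with
  | zero =>
    simp only [mul_zero, map_zero]
    have := Dall_smul n 0 (fun _ => 0) l
    simpa using this
  | add p q hp hq =>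
    simp only [mul_add, map_add]
    rw [Dall_add, hp, hq]
  | single m c =>
    have : ∀ l, (mon l * AddMonoidAlgebra.single m c : GR n) =
        AddMonoidAlgebra.single (l + m) c := by
      intro l
      simp [mon, AddMonoidAlgebra.single_mul_single]
    simp only [this, Phi_single]
    rw [Dall_smul, Dall_shift]

lemma Dall_multilinear : ∀ (n : ℕ) {N : Type} [AddCommGroup N] [Module ℤ N]
    (M : MultilinearMap ℤ (fun _ : Fin n => N) ℤ) (r : ℤ → N) (l : Fin n → ℤ),
    Dall n (fun l => M (fun i => r (l i))) l = M (fun i => r (l i + 1) - r (l i))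
  | 0, N, _, _, M, r, l => by
    simp only [Dall]
    congr 1
    exact Subsingleton.elim _ _
  | n + 1, N, _, _, M, r, l => by
    simp only [Dall]
    have h := Dall_multilinear n (M.curryLeft (r (l 0 + 1) - r (l 0))) r (Fin.tail l)
    have e : ∀ (a : N) (f : Fin (n + 1) → N), f 0 = a → M f = M.curryLeft a (fun i => f i.succ) := by
      intro a f h
      rw [MultilinearMap.curryLeft_apply]
      congr 1
      subst h
      exact (Fin.cons_self_tail f).symm
    rw [e (r (l 0 + 1) - r (l 0)) (fun i => r (l i + 1) - r (l i)) rfl]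
    refine Eq.trans ?_ h
    congr 1
    funext l'
    rw [e (r (l 0 + 1)) _ (by simp), e (r (l 0)) _ (by simp), map_sub]
    simp

theorem Dall_GG (n : ℕ) (l : Fin n → ℤ) : Dall n (GG n) l = FF n l := by
  have : Dall n (detf (rowW n)) = detf (rowV n) := by
    funext l
    have h := Dall_multilinear n (Matrix.detRowAlternating (n := Fin n) (R := ℤ)).toMultilinearMap
      (rowW n) l
    simp only [rowW_diff] at h
    exact h
  unfold GG FF
  rw [Dall_Phi, this]


/-! ### The box lemma -/

def Adj {n : ℕ} (l : Fin n → ℤ) : Prop := ∀ i j : Fin n, i.1 + 1 = j.1 → l i < l j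

open Classical in
noncomputable def Il (n : ℕ) (k : Fin (n + 1) → ℤ) : Finset (Fin n → ℤ) :=
  (Fintype.piFinset fun i : Fin n => Finset.Icc (k i.castSucc) (k i.succ)).filter Adj

lemma mem_Il {n : ℕ} {k : Fin (n + 1) → ℤ} {l : Fin n → ℤ} :
    l ∈ Il n k ↔ (∀ i : Fin n, k i.castSucc ≤ l i ∧ l i ≤ k i.succ) ∧ Adj l := by
  simp [Il]

lemma Adj_cons {n : ℕ} (a : ℤ) (l : Fin n → ℤ) :
    Adj (Fin.cons a l : Fin (n + 1) → ℤ) ↔ (∀ i : Fin n, i.1 = 0 → a < l i) ∧ Adj l := by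
  constructor
  · intro h
    refine ⟨fun i hi => ?_, fun i j hij => ?_⟩
    · simpa using h 0 i.succ (by simp [hi])
    · simpa using h i.succ j.succ (by simp [hij])
  · rintro ⟨h1, h2⟩ i j
    refine Fin.cases (fun hij => ?_) (fun j hij => ?_) j
    · simp at hij
    revert hij
    refine Fin.cases (fun hij => ?_) (fun i hij => ?_) i
    · simp at hij
      simpa using h1 j (by omega)
    · simp at hij
      simpa using h2 i j hij

lemma mem_Il_cons {n : ℕ} (k0 k1 a : ℤ) (k : Fin n → ℤ) (l : Fin n → ℤ) :
    (Fin.cons a l : Fin (n + 1) → ℤ) ∈ Il (n + 1) (Fin.cons k0 (Fin.cons k1 k)) ↔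
      (k0 ≤ a ∧ a ≤ k1) ∧
        l ∈ Il n (Fin.cons (if a < k1 then k1 else k1 + 1) k) := by
  rw [mem_Il, mem_Il, Adj_cons, Fin.forall_fin_succ]
  simp only [Fin.castSucc_zero, Fin.cons_zero, Fin.cons_succ, ← Fin.succ_castSucc]
  cases n with
  | zero => simp
  | succ n =>
    have e : (∀ i : Fin (n + 1), i.1 = 0 → a < l i) ↔ a < l 0 := by
      constructor
      · intro h; exact h 0 rfl
      · intro h i hi
        have : i = 0 := Fin.ext hi
        rw [this]; exact h
    rw [e, Fin.forall_fin_succ, Fin.forall_fin_succ]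
    simp only [Fin.castSucc_zero, Fin.cons_zero, ← Fin.succ_castSucc, Fin.cons_succ]
    split_ifs with h
    · constructor
      · rintro ⟨⟨h1, ⟨h2, h3⟩, h4⟩, h5, h6⟩
        exact ⟨h1, ⟨⟨h2, h3⟩, h4⟩, h6⟩
      · rintro ⟨h1, ⟨⟨h2, h3⟩, h4⟩, h6⟩
        exact ⟨⟨h1, ⟨h2, h3⟩, h4⟩, by omega, h6⟩
    · constructor
      · rintro ⟨⟨h1, ⟨h2, h3⟩, h4⟩, h5, h6⟩
        exact ⟨h1, ⟨⟨by omega, h3⟩, h4⟩, h6⟩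
      · rintro ⟨h1, ⟨⟨h2, h3⟩, h4⟩, h6⟩
        exact ⟨⟨h1, ⟨by omega, h3⟩, h4⟩, by omega, h6⟩

noncomputable def Ssum (n : ℕ) (A : (Fin n → ℤ) → ℤ) (k : Fin (n + 1) → ℤ) : ℤ :=
  ∑ l ∈ Il n k, A l

lemma Ssum_zero (A : (Fin 0 → ℤ) → ℤ) (k : Fin 1 → ℤ) (l : Fin 0 → ℤ) : Ssum 0 A k = A l := by
  have : Il 0 k = {l} := by
    ext x
    have hx : x = l := Subsingleton.elim _ _
    simp [mem_Il, hx, Adj]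
  rw [Ssum, this, Finset.sum_singleton]

lemma Ssum_succ_aux (n : ℕ) (A : (Fin (n + 1) → ℤ) → ℤ) (k0 k1 : ℤ) (k : Fin n → ℤ) :
    Ssum (n + 1) A (Fin.cons k0 (Fin.cons k1 k)) =
      ∑ a ∈ Finset.Icc k0 k1, Ssum n (fun l => A (Fin.cons a l))
        (Fin.cons (if a < k1 then k1 else k1 + 1) k) := by
  unfold Ssum
  rw [Finset.sum_sigma']
  refine Finset.sum_nbij' (fun l => ⟨l 0, Fin.tail l⟩) (fun x => Fin.cons x.1 x.2) ?_ ?_ ?_ ?_ ?_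
  · intro l hl
    rw [← Fin.cons_self_tail l, mem_Il_cons] at hl
    simpa using hl
  · rintro ⟨a, l⟩ h
    rw [mem_Il_cons]
    simpa using h
  · intro l _
    simp
  · rintro ⟨a, l⟩ _
    simp
  · intro l _
    simp

lemma Ssum_succ (n : ℕ) (A : (Fin (n + 1) → ℤ) → ℤ) (k0 k1 : ℤ) (k : Fin n → ℤ) (h : k0 ≤ k1) :
    Ssum (n + 1) A (Fin.cons k0 (Fin.cons k1 k)) =
      ∑ a ∈ Finset.Ico k0 k1, Ssum n (fun l => A (Fin.cons a l)) (Fin.cons k1 k) +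
      Ssum n (fun l => A (Fin.cons k1 l)) (Fin.cons (k1 + 1) k) := by
  rw [Ssum_succ_aux, ← Finset.Ico_insert_right h, Finset.sum_insert (by simp), add_comm,
    if_neg (lt_irrefl k1)]
  refine congrArg (· + _) (Finset.sum_congr rfl fun a ha => ?_)
  rw [if_pos (Finset.mem_Ico.1 ha).2]

lemma telescope (f : ℤ → ℤ) (a b : ℤ) (h : a ≤ b) :
    ∑ x ∈ Finset.Ico a b, (f (x + 1) - f x) = f b - f a := by
  induction b, h using Int.leInduction with
  | base => simp
  | succ b hb ih =>
    have e : Finset.Ico a (b + 1) = insert b (Finset.Ico a b) := by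
      ext x; simp only [Finset.mem_insert, Finset.mem_Ico]; omega
    rw [e, Finset.sum_insert (by simp), ih]
    ring

/-- weakly increasing in the first step, strictly afterwards -/
def WS {n : ℕ} (k : Fin n → ℤ) : Prop :=
  ∀ i j : Fin n, i.1 + 1 = j.1 → k i ≤ k j ∧ (i.1 ≠ 0 → k i < k j)

lemma Adj.toWS {n : ℕ} {k : Fin n → ℤ} (h : Adj k) : WS k :=
  fun i j hij => ⟨(h i j hij).le, fun _ => h i j hij⟩

lemma WS.tail {n : ℕ} {a : ℤ} {k : Fin n → ℤ} (h : WS (Fin.cons a k : Fin (n + 1) → ℤ)) :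
    Adj k := by
  intro i j hij
  simpa using (h i.succ j.succ (by simp [hij])).2 (by simp)

lemma Adj.cons_succ_WS {n : ℕ} {a : ℤ} {k : Fin n → ℤ}
    (h : Adj (Fin.cons a k : Fin (n + 1) → ℤ)) : WS (Fin.cons (a + 1) k : Fin (n + 1) → ℤ) := by
  rw [Adj_cons] at h
  intro i j
  refine Fin.cases (fun hij => ?_) (fun j hij => ?_) j
  · simp at hij
  revert hij
  refine Fin.cases (fun hij => ?_) (fun i hij => ?_) i
  · simp at hij
    have := h.1 j (by omega)
    simp only [Fin.cons_zero, Fin.cons_succ]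
    exact ⟨by omega, fun h => absurd rfl h⟩
  · simp at hij
    have := h.2 i j hij
    simp only [Fin.cons_succ]
    exact ⟨this.le, fun _ => this⟩

lemma single_zero_cons {n : ℕ} : (Pi.single 0 1 : Fin (n + 1) → ℤ) = Fin.cons 1 0 := by
  funext i
  refine Fin.cases ?_ (fun i => ?_) i <;> simp

lemma single_succ_cons {n : ℕ} (i : Fin n) :
    (Pi.single i.succ 1 : Fin (n + 1) → ℤ) = Fin.cons 0 (Pi.single i 1) := by
  funext j
  refine Fin.cases ?_ (fun j => ?_) j
  · simp [Pi.single_apply]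
  · simp [Pi.single_apply]

lemma ZP.cons {n : ℕ} {G : (Fin (n + 1) → ℤ) → ℤ} (h : ZP (n + 1) G) (a : ℤ) :
    ZP n (fun l => G (Fin.cons a l)) := by
  intro i j hij l hl
  have := h i.succ j.succ (by simp [hij]) (Fin.cons a l) (by simpa using hl)
  simpa only [single_succ_cons, cons_add_cons, add_zero] using this

lemma ZP.sub {n : ℕ} {G G' : (Fin n → ℤ) → ℤ} (h : ZP n G) (h' : ZP n G') :
    ZP n (fun l => G l - G' l) := by
  intro i j hij l hl
  have h1 := h i j hij l hl
  have h2 := h' i j hij l hl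
  simp only
  linarith

lemma Hs_key (n : ℕ) (G : (Fin (n + 1) → ℤ) → ℤ) (h : ZP (n + 1) G) (a : ℤ) (k : Fin n → ℤ) :
    Hs n (fun l => G (Fin.cons a l)) (Fin.cons a k) +
      Hs n (fun l => G (Fin.cons (a + 1) l)) (Fin.cons (a + 1) k) -
      Hs n (fun l => G (Fin.cons a l)) (Fin.cons (a + 1) k) =
    G (Fin.cons (a + 1) (fun i => k i + 1)) := by
  cases n with
  | zero =>
    rw [Hs_zero _ _ (fun i => k i + 1), Hs_zero _ _ (fun i => k i + 1),
      Hs_zero _ _ (fun i => k i + 1)]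
    ring
  | succ n =>
    rw [Hs_succ, Hs_succ, Hs_succ]
    have hz : ∀ l : Fin n → ℤ, G (Fin.cons a (Fin.cons a l)) +
        G (Fin.cons (a + 1) (Fin.cons (a + 1) l)) = G (Fin.cons a (Fin.cons (a + 1) l)) := by
      intro l
      have := h 0 1 (by simp) (Fin.cons a (Fin.cons a l)) (by
        have : (1 : Fin (n + 2)) = Fin.succ 0 := rfl
        rw [this]; simp)
      have e : (1 : Fin (n + 2)) = Fin.succ 0 := rfl
      rw [e] at this
      simpa only [single_succ_cons, single_zero_cons, cons_add_cons, add_zero] using this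
    have := Hs_add n (fun l => G (Fin.cons a (Fin.cons a l)))
      (fun l => G (Fin.cons (a + 1) (Fin.cons (a + 1) l))) k
    simp only [hz] at this
    linarith

theorem box : ∀ (n : ℕ) (G : (Fin n → ℤ) → ℤ) (_ : ZP n G) (k : Fin (n + 1) → ℤ) (_ : WS k),
    Ssum n (Dall n G) k = Hs n G k
  | 0, G, _, k, _ => by
    rw [Ssum_zero _ _ 0, Hs_zero _ _ 0]
    rfl
  | n + 1, G, hG, k, hk => by
    obtain ⟨k0, K, rfl⟩ : ∃ k0 K, k = Fin.cons k0 K := ⟨_, _, (Fin.cons_self_tail k).symm⟩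
    obtain ⟨k1, k', rfl⟩ : ∃ k0 K', K = Fin.cons k0 K' := ⟨_, _, (Fin.cons_self_tail K).symm⟩
    have h01 : k0 ≤ k1 := by
      have := (hk 0 1 (by simp)).1
      have e : (1 : Fin (n + 2)) = Fin.succ 0 := rfl
      rw [e] at this
      simpa using this
    have hK := hk.tail
    have hI : ∀ a, ∀ k : Fin (n + 1) → ℤ, WS k →
        Ssum n (fun l => Dall (n + 1) G (Fin.cons a l)) k =
        Hs n (fun l => G (Fin.cons (a + 1) l)) k - Hs n (fun l => G (Fin.cons a l)) k := by
      intro a k hk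
      rw [← Hs_sub, ← box n _ ((hG.cons (a + 1)).sub (hG.cons a)) k hk]
      rfl
    rw [Ssum_succ _ _ _ _ _ h01, hI _ _ hK.cons_succ_WS]
    simp only [hI _ _ hK.toWS]
    rw [telescope (fun a => Hs n (fun l => G (Fin.cons a l)) (Fin.cons k1 k')) _ _ h01, Hs_succ]
    have := Hs_key n G hG k1 k'
    have e : (fun i => (Fin.cons k1 k' : Fin (n + 1) → ℤ) i + 1) =
        Fin.cons (k1 + 1) (fun i => k' i + 1) := by
      funext i
      refine Fin.cases ?_ (fun i => ?_) i <;> simp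
    rw [e]
    linarith

theorem Ssum_FF (n : ℕ) (k : Fin (n + 1) → ℤ) (hk : WS k) : Ssum n (FF n) k = FF (n + 1) k := by
  rw [FF_eq_Hs, ← box n _ (ZP_GG n) k hk]
  congr 1
  funext l
  rw [Dall_GG]

theorem Ssum_FF_cons (n : ℕ) (y : ℤ) (k : Fin (n + 1) → ℤ) (hk : WS k) :
    Ssum n (fun l => FF (n + 1) (Fin.cons y l)) k =
      -(FF (n + 2) (Fin.cons (y + 1) k) - FF (n + 2) (Fin.cons y k)) := by
  rw [FF_eq_Hs, FF_eq_Hs, Hs_succ, Hs_succ]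
  have := box n _ (((ZP_GG (n + 1)).cons (y + 1)).sub ((ZP_GG (n + 1)).cons y)) k hk
  rw [Hs_sub] at this
  have e : (fun l => FF (n + 1) (Fin.cons y l)) = Dall n (fun l => GG (n + 1) (Fin.cons (y + 1) l) -
      GG (n + 1) (Fin.cons y l)) := by
    funext l
    rw [← Dall_GG]
    rfl
  rw [e, this]
  ring


/-! ### Counting monotone triangles -/

/-- weighted count of monotone triangles, by recursion on the number of rows -/
noncomputable def ee : (n : ℕ) → (Fin n → ℤ) → ℕ → ℤ
  | 0, _, j => if j = 0 then 1 else 0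
  | n + 1, k, j =>
    if k 0 = 1 then (if j = 0 then 0 else ∑ l ∈ Il n k, ee n l (j - 1))
    else ∑ l ∈ Il n k, ee n l j

def cnt {n : ℕ} (a : ∀ r : Fin n, Fin (r.1 + 1) → ℤ) : ℕ :=
  (Finset.univ.filter (fun r : Fin n => a r ⟨0, Nat.succ_pos r.1⟩ = 1)).card

def Good {n : ℕ} (a : ∀ r : Fin n, Fin (r.1 + 1) → ℤ) (k : Fin n → ℤ) (j : ℕ) : Prop :=
  IsGT a ∧ StrictRows a ∧ BottomRow a k ∧ cnt a = j

/-- add a bottom row -/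
def addRow {n : ℕ} (b : ∀ r : Fin n, Fin (r.1 + 1) → ℤ) (k : Fin (n + 1) → ℤ) :
    ∀ r : Fin (n + 1), Fin (r.1 + 1) → ℤ :=
  fun r j => if h : r.1 < n then b ⟨r.1, h⟩ j else k ⟨j.1, by have := j.2; have := r.2; omega⟩

lemma addRow_lt {n : ℕ} (b : ∀ r : Fin n, Fin (r.1 + 1) → ℤ) (k : Fin (n + 1) → ℤ)
    (r : ℕ) (h : r < n) (h' : r < n + 1) (j : Fin (r + 1)) :
    addRow b k ⟨r, h'⟩ j = b ⟨r, h⟩ j := by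
  simp [addRow, h]

lemma addRow_last {n : ℕ} (b : ∀ r : Fin n, Fin (r.1 + 1) → ℤ) (k : Fin (n + 1) → ℤ)
    (r : ℕ) (h : ¬ r < n) (h' : r < n + 1) (j : Fin (r + 1)) :
    addRow b k ⟨r, h'⟩ j = k ⟨j.1, by have := j.2; omega⟩ := by
  simp [addRow, h]

lemma cnt_addRow {n : ℕ} (b : ∀ r : Fin n, Fin (r.1 + 1) → ℤ) (k : Fin (n + 1) → ℤ) :
    cnt (addRow b k) = cnt b + if k 0 = 1 then 1 else 0 := by
  unfold cnt
  rw [Finset.card_filter, Finset.card_filter, Fin.sum_univ_castSucc]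
  congr 1
  · refine Finset.sum_congr rfl fun r _ => ?_
    have := addRow_lt b k r.1 r.2 (by omega) ⟨0, Nat.succ_pos _⟩
    rw [← this]
    rfl
  · have := addRow_last b k n (by omega) (by omega) ⟨0, Nat.succ_pos _⟩
    have e : (⟨0, by omega⟩ : Fin (n + 1)) = 0 := rfl
    rw [← e, ← this]
    rfl

lemma StrictRows_addRow {n : ℕ} (b : ∀ r : Fin n, Fin (r.1 + 1) → ℤ) (k : Fin (n + 1) → ℤ)
    (hk : Adj k) : StrictRows (addRow b k) ↔ StrictRows b := by
  constructor
  · intro h i j hj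
    have := h ⟨i.1, by omega⟩ j hj
    rwa [addRow_lt _ _ _ i.2, addRow_lt _ _ _ i.2] at this
  · rintro h ⟨i, hi⟩ j hj
    by_cases hin : i < n
    · rw [addRow_lt _ _ _ hin, addRow_lt _ _ _ hin]
      exact h ⟨i, hin⟩ j hj
    · rw [addRow_last _ _ _ hin, addRow_last _ _ _ hin]
      exact hk _ _ rfl

lemma IsGT_addRow {n : ℕ} (b : ∀ r : Fin n, Fin (r.1 + 1) → ℤ) (k : Fin (n + 1) → ℤ) :
    IsGT (addRow b k) ↔ IsGT b ∧ ∀ i : Fin n, i.1 + 1 = n → ∀ j : Fin (i.1 + 1),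
      k ⟨j.1, by have := j.2; omega⟩ ≤ b i j ∧ b i j ≤ k ⟨j.1 + 1, by have := j.2; omega⟩ := by
  constructor
  · intro h
    refine ⟨fun i hi j => ?_, fun i hi j => ?_⟩
    · have := h ⟨i.1, by omega⟩ (show i.1 + 1 < n + 1 by omega) j
      rw [addRow_lt _ _ _ i.2, addRow_lt _ _ _ hi, addRow_lt _ _ _ hi] at this
      exact this
    · have := h ⟨i.1, by omega⟩ (by simp) j
      rw [addRow_lt _ _ _ i.2, addRow_last _ _ _ (by simp; omega),
        addRow_last _ _ _ (by simp; omega)] at this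
      exact this
  · rintro ⟨h1, h2⟩ ⟨i, hi'⟩ hi j
    have hin : i < n := by simp at hi; omega
    by_cases h : i + 1 < n
    · rw [addRow_lt _ _ _ hin, addRow_lt _ _ _ h, addRow_lt _ _ _ h]
      exact h1 ⟨i, hin⟩ h j
    · rw [addRow_lt _ _ _ hin, addRow_last _ _ _ h, addRow_last _ _ _ h]
      exact h2 ⟨i, hin⟩ (by simp; omega) j

lemma BottomRow_addRow {n : ℕ} (b : ∀ r : Fin n, Fin (r.1 + 1) → ℤ) (k : Fin (n + 1) → ℤ) :
    BottomRow (addRow b k) k := by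
  rintro ⟨i, hi⟩ h j
  rw [addRow_last _ _ _ (by simp at h; omega)]

lemma addRow_inj {n : ℕ} {b b' : ∀ r : Fin n, Fin (r.1 + 1) → ℤ} {k : Fin (n + 1) → ℤ}
    (h : addRow b k = addRow b' k) : b = b' := by
  funext r j
  have := congrFun (congrFun h ⟨r.1, by omega⟩) j
  rwa [addRow_lt _ _ _ r.2, addRow_lt _ _ _ r.2] at this

lemma exists_addRow {n : ℕ} {a : ∀ r : Fin (n + 1), Fin (r.1 + 1) → ℤ} {k : Fin (n + 1) → ℤ}
    (h : BottomRow a k) : ∃ b, a = addRow b k := by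
  refine ⟨fun r j => a ⟨r.1, by omega⟩ j, ?_⟩
  funext ⟨r, hr⟩ j
  by_cases hrn : r < n
  · rw [addRow_lt _ _ _ hrn]
  · rw [addRow_last _ _ _ hrn]
    exact h _ (by simp; omega) j

lemma exists_bottom {n : ℕ} (b : ∀ r : Fin n, Fin (r.1 + 1) → ℤ) : ∃ l, BottomRow b l := by
  cases n with
  | zero => exact ⟨0, fun i => i.elim0⟩
  | succ n =>
    refine ⟨b ⟨n, by omega⟩, ?_⟩
    rintro ⟨i, hi⟩ h j
    have : i = n := by simpa using h
    subst this
    rfl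

lemma bottom_unique {n : ℕ} {b : ∀ r : Fin n, Fin (r.1 + 1) → ℤ} {l l' : Fin n → ℤ}
    (h : BottomRow b l) (h' : BottomRow b l') : l = l' := by
  cases n with
  | zero => exact Subsingleton.elim _ _
  | succ n =>
    funext i
    exact (h ⟨n, by omega⟩ rfl i).symm.trans (h' ⟨n, by omega⟩ rfl i)

lemma Good_addRow {n : ℕ} (b : ∀ r : Fin n, Fin (r.1 + 1) → ℤ) (k : Fin (n + 1) → ℤ)
    (hk : Adj k) (j : ℕ) : Good (addRow b k) k (j + if k 0 = 1 then 1 else 0) ↔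
      ∃ l ∈ Il n k, Good b l j := by
  unfold Good
  rw [IsGT_addRow, StrictRows_addRow _ _ hk, cnt_addRow, Nat.add_right_cancel_iff]
  constructor
  · rintro ⟨⟨h1, h2⟩, h3, -, h4⟩
    obtain ⟨l, hl⟩ := exists_bottom b
    refine ⟨l, ?_, h1, h3, hl, h4⟩
    rw [mem_Il]
    cases n with
    | zero => exact ⟨fun i => i.elim0, fun i => i.elim0⟩
    | succ n =>
      refine ⟨fun i => ?_, fun i j hij => ?_⟩
      · have := h2 ⟨n, by omega⟩ rfl i
        rw [hl _ rfl] at this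
        exact this
      · have := h3 ⟨n, by omega⟩ i (by have := j.2; simp; omega)
        rw [hl _ rfl, hl _ rfl] at this
        have e : j = ⟨i.1 + 1, by have := j.2; omega⟩ := Fin.ext hij.symm
        rw [e]
        exact this
  · rintro ⟨l, hl, h1, h3, h5, h4⟩
    rw [mem_Il] at hl
    refine ⟨⟨h1, fun i hi j => ?_⟩, h3, BottomRow_addRow b k, h4⟩
    rw [h5 i hi]
    exact hl.1 ⟨j.1, by have := j.2; omega⟩

lemma exists_T : ∀ (n : ℕ) (k : Fin n → ℤ) (j : ℕ),
    ∃ T : Finset (∀ r : Fin n, Fin (r.1 + 1) → ℤ), Adj k →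
      (∀ a, a ∈ T ↔ Good a k j) ∧ (T.card : ℤ) = ee n k j
  | 0, k, j => by
    classical
    refine ⟨if j = 0 then Finset.univ else ∅, fun _ => ⟨fun a => ?_, ?_⟩⟩
    · have : Good a k j ↔ j = 0 := by
        unfold Good
        constructor
        · rintro ⟨-, -, -, h⟩
          rw [← h]
          rfl
        · rintro rfl
          exact ⟨fun i => i.elim0, fun i => i.elim0, fun i => i.elim0, rfl⟩
      rw [this]
      split_ifs with h
      · simp only [Finset.mem_univ, h]
      · simp [h]
    · simp only [ee]
      split_ifs with h <;> simp
  | n + 1, k, j => by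
    classical
    choose T hT using exists_T n
    have key : ∀ j', Adj k →
        (∀ a, a ∈ ((Il n k).sigma fun l => T l j').image (fun x => addRow x.2 k) ↔
          Good a k (j' + if k 0 = 1 then 1 else 0)) ∧
        ((((Il n k).sigma fun l => T l j').image (fun x => addRow x.2 k)).card : ℤ) =
          ∑ l ∈ Il n k, ee n l j' := by
      intro j' hk
      have hA : ∀ l ∈ Il n k, Adj l := fun l hl => (mem_Il.1 hl).2
      constructor
      · intro a
        rw [Finset.mem_image]
        constructor
        · rintro ⟨⟨l, b⟩, hx, rfl⟩
          rw [Finset.mem_sigma] at hx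
          rw [Good_addRow _ _ hk]
          exact ⟨l, hx.1, ((hT l j' (hA l hx.1)).1 b).1 hx.2⟩
        · intro h
          obtain ⟨b, rfl⟩ := exists_addRow h.2.2.1
          rw [Good_addRow _ _ hk] at h
          obtain ⟨l, hl, hb⟩ := h
          exact ⟨⟨l, b⟩, Finset.mem_sigma.2 ⟨hl, ((hT l j' (hA l hl)).1 b).2 hb⟩, rfl⟩
      · rw [Finset.card_image_of_injOn, Finset.card_sigma]
        · push_cast
          exact Finset.sum_congr rfl fun l hl => (hT l j' (hA l hl)).2
        · rintro ⟨l, b⟩ hx ⟨l', b'⟩ hx' h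
          have hb : b = b' := addRow_inj h
          subst hb
          rw [Finset.mem_coe, Finset.mem_sigma] at hx hx'
          have h1 := ((hT l j' (hA l hx.1)).1 b).1 hx.2
          have h2 := ((hT l' j' (hA l' hx'.1)).1 b).1 hx'.2
          have := bottom_unique h1.2.2.1 h2.2.2.1
          rw [this]
    by_cases h1 : k 0 = 1
    · rcases j with _ | j
      · refine ⟨∅, fun hk => ⟨fun a => ?_, ?_⟩⟩
        · simp only [Finset.notMem_empty, false_iff]
          intro h
          obtain ⟨b, rfl⟩ := exists_addRow h.2.2.1
          have := h.2.2.2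
          rw [cnt_addRow, if_pos h1] at this
          omega
        · simp [ee, h1]
      · refine ⟨((Il n k).sigma fun l => T l j).image (fun x => addRow x.2 k), fun hk => ?_⟩
        · have := key j hk
          rw [if_pos h1] at this
          simp only [ee, h1, if_true, Nat.add_eq_zero_iff, one_ne_zero, and_false, if_false,
            Nat.add_sub_cancel]
          exact this
    · refine ⟨((Il n k).sigma fun l => T l j).image (fun x => addRow x.2 k), fun hk => ?_⟩
      · have := key j hk
        rw [if_neg h1, add_zero] at this
        simp only [ee, h1, if_false]
        exact this

lemma card_eq_ee (n : ℕ) (k : Fin n → ℤ) (hk : Adj k) (j : ℕ) :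
    (Nat.card {a : ∀ r : Fin n, Fin (r.1 + 1) → ℤ // Good a k j} : ℤ) = ee n k j := by
  obtain ⟨T, hT⟩ := exists_T n k j
  obtain ⟨h1, h2⟩ := hT hk
  rw [← h2]
  congr 1
  rw [← Nat.card_eq_finsetCard T]
  exact Nat.card_congr (Equiv.subtypeEquivRight fun a => (h1 a).symm)

lemma FF_zero (k : Fin 0 → ℤ) : FF 0 k = 1 := by
  unfold FF PP
  have : pairProd (fun p q : Fin 0 => wt (xv p) (xv q)) = 1 := by
    simp [pairProd]
  rw [this, mul_one, Phi_mon]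
  exact Matrix.det_fin_zero

lemma FF_one (k : Fin 1 → ℤ) : FF 1 k = 1 := by
  rw [← Ssum_FF 0 k (fun i j h => by omega), Ssum_zero _ _ 0, FF_zero]

lemma ee_ge_two : ∀ (n : ℕ) (k : Fin n → ℤ) (_ : Adj k) (_ : ∀ i : Fin n, i.1 = 0 → 2 ≤ k i),
    ee n k 0 = FF n k ∧ ∀ j, ee n k (j + 1) = 0
  | 0, k, _, _ => by simp [ee, FF_zero]
  | n + 1, k, hk, h2 => by
    have h0 := h2 0 rfl
    have h1 : k 0 ≠ 1 := by omega
    have hl : ∀ l ∈ Il n k, Adj l ∧ ∀ i : Fin n, i.1 = 0 → 2 ≤ l i := by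
      intro l hl
      rw [mem_Il] at hl
      refine ⟨hl.2, fun i hi => ?_⟩
      have h3 := (hl.1 i).1
      have e : i.castSucc = 0 := Fin.ext hi
      rw [e] at h3
      omega
    simp only [ee, h1, if_false]
    constructor
    · rw [← Ssum_FF n k hk.toWS]
      exact Finset.sum_congr rfl fun l h => (ee_ge_two n l (hl l h).1 (hl l h).2).1
    · intro j
      exact Finset.sum_eq_zero fun l h => (ee_ge_two n l (hl l h).1 (hl l h).2).2 j

lemma ee_one_zero (n : ℕ) (k : Fin n → ℤ) : ee (n + 1) (Fin.cons 1 k) 0 = 0 := by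
  simp [ee]

lemma ee_one_succ (n : ℕ) (k : Fin n → ℤ) (j : ℕ) : ee (n + 1) (Fin.cons 1 k) (j + 1) =
    Ssum n (fun l => ee n l j) (Fin.cons 1 k) := by
  simp [ee, Ssum]

lemma Ssum_split (n : ℕ) (A : (Fin (n + 1) → ℤ) → ℤ) (k1 : ℤ) (k : Fin n → ℤ) (h : 1 < k1) :
    Ssum (n + 1) A (Fin.cons 1 (Fin.cons k1 k)) =
      Ssum n (fun l => A (Fin.cons 1 l)) (Fin.cons k1 k) +
      Ssum (n + 1) A (Fin.cons 2 (Fin.cons k1 k)) := by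
  rw [Ssum_succ_aux, Ssum_succ_aux]
  have : Finset.Icc 1 k1 = insert 1 (Finset.Icc 2 k1) := by
    ext x
    simp only [Finset.mem_insert, Finset.mem_Icc]
    omega
  rw [this, Finset.sum_insert (by simp), if_pos h]

theorem ee_one : ∀ (n : ℕ) (k : Fin n → ℤ) (_ : Adj (Fin.cons 1 k : Fin (n + 1) → ℤ)) (j : ℕ),
    ee (n + 1) (Fin.cons 1 k) (j + 1) =
      (-1) ^ j * (fwdDiff (1 : ℤ))^[j] (fun y : ℤ => FF (n + 1) (Fin.cons y k)) 2
  | 0, k, _, j => by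
    rw [ee_one_succ, Ssum_zero _ _ 0]
    have hc : (fun y : ℤ => FF (0 + 1) (Fin.cons y k)) = fun _ => 1 := funext fun y => FF_one _
    rw [hc]
    simp only [ee]
    cases j with
    | zero => simp
    | succ j =>
      rw [Function.iterate_succ_apply, fwdDiff_const]
      have : (fwdDiff (1 : ℤ))^[j] (fun _ : ℤ => (0 : ℤ)) = fun _ => 0 := by
        clear * -
        induction j with
        | zero => rfl
        | succ j ih => rw [Function.iterate_succ_apply, fwdDiff_const, ih]
      rw [this]
      simp
  | n + 1, k, hk, j => by
    obtain ⟨k1, k', rfl⟩ : ∃ k0 K', k = Fin.cons k0 K' := ⟨_, _, (Fin.cons_self_tail k).symm⟩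
    have hk' := (Adj_cons _ _).1 hk
    have h1 : 1 < k1 := by simpa using hk'.1 0 rfl
    have hW : WS (Fin.cons 2 (Fin.cons k1 k') : Fin (n + 2) → ℤ) := hk.cons_succ_WS
    have hl2 : ∀ l ∈ Il (n + 1) (Fin.cons 2 (Fin.cons k1 k')),
        Adj l ∧ ∀ i : Fin (n + 1), i.1 = 0 → 2 ≤ l i := by
      intro l hl
      rw [mem_Il] at hl
      refine ⟨hl.2, fun i hi => ?_⟩
      have h3 := (hl.1 i).1
      have e : i.castSucc = 0 := Fin.ext hi
      rw [e] at h3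
      simpa using h3
    rw [ee_one_succ, Ssum_split _ _ _ _ h1]
    cases j with
    | zero =>
      simp only [ee_one_zero, pow_zero, one_mul, Function.iterate_zero, id]
      rw [← Ssum_FF _ _ hW]
      have e0 : Ssum n (fun _ => 0) (Fin.cons k1 k') = 0 := Finset.sum_const_zero
      rw [e0, zero_add]
      exact Finset.sum_congr rfl fun l h => (ee_ge_two _ l (hl2 l h).1 (hl2 l h).2).1
    | succ j =>
      have e0 : Ssum (n + 1) (fun l => ee (n + 1) l (j + 1)) (Fin.cons 2 (Fin.cons k1 k')) = 0 :=
        Finset.sum_eq_zero fun l h => (ee_ge_two _ l (hl2 l h).1 (hl2 l h).2).2 j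
      rw [e0, add_zero, Function.iterate_succ_apply]
      have e1 : fwdDiff (1 : ℤ) (fun y : ℤ => FF (n + 2) (Fin.cons y (Fin.cons k1 k'))) =
          (-1 : ℤ) • ∑ l ∈ Il n (Fin.cons k1 k'), fun y : ℤ => FF (n + 1) (Fin.cons y l) := by
        funext y
        have := Ssum_FF_cons n y (Fin.cons k1 k') hk'.2.toWS
        rw [fwdDiff, Pi.smul_apply, Finset.sum_apply]
        unfold Ssum at this
        rw [this]
        simp
      rw [e1, fwdDiff_iter_const_smul, fwdDiff_iter_finsetSum, Pi.smul_apply, Finset.sum_apply,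
        smul_eq_mul, pow_succ, mul_assoc, ← mul_assoc (-1 : ℤ), neg_one_mul, neg_neg, one_mul,
        Finset.mul_sum]
      refine Finset.sum_congr rfl fun l hl => ?_
      rw [mem_Il] at hl
      refine ee_one n l ?_ j
      rw [Adj_cons]
      refine ⟨fun i hi => ?_, hl.2⟩
      have h3 := (hl.1 i).1
      have e : i.castSucc = 0 := Fin.ext hi
      rw [e] at h3
      simp at h3
      omega


/-! ### The linear system -/

noncomputable def gfun (m : ℕ) (x : ℤ) : ℤ :=
  FF (m + 1) (Fin.cons x (fun i : Fin m => (i.1 : ℤ) + 2))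

lemma bottom_cons (m : ℕ) : (fun i : Fin (m + 1) => (i.1 : ℤ) + 1) =
    Fin.cons 1 (fun i : Fin m => (i.1 : ℤ) + 2) := by
  funext i
  refine Fin.cases ?_ (fun i => ?_) i
  · simp
  · simp
    ring

lemma Adj_bottom (n : ℕ) : Adj (fun i : Fin n => (i.1 : ℤ) + 1) := by
  intro i j hij
  simp only
  omega

lemma Arefined_eq_ee (n j : ℕ) : (Arefined n j : ℤ) = ee n (fun i : Fin n => (i.1 : ℤ) + 1) j :=
  card_eq_ee n _ (Adj_bottom n) j

lemma Arefined_eq (m j : ℕ) : (Arefined (m + 1) (j + 1) : ℤ) =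
    (-1) ^ j * (fwdDiff (1 : ℤ))^[j] (gfun m) 2 := by
  rw [Arefined_eq_ee, bottom_cons, ee_one]
  · rfl
  · rw [← bottom_cons]
    exact Adj_bottom _

lemma Arefined_zero (n j : ℕ) (h : n < j) : Arefined n j = 0 := by
  unfold Arefined
  rw [Nat.card_eq_zero]
  left
  constructor
  rintro ⟨a, -, -, -, h4⟩
  have := Finset.card_filter_le (Finset.univ : Finset (Fin n))
    (fun r : Fin n => a r ⟨0, Nat.succ_pos r.1⟩ = 1)
  rw [h4, Finset.card_univ, Fintype.card_fin] at this
  omega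

lemma fwdDiff_reflect (g : ℤ → ℤ) (c s : ℤ) (h : ∀ x, g (c - x) = s * g x) (j : ℕ) :
    ∀ y, (fwdDiff (1 : ℤ))^[j] g (c - y - j) = (-1) ^ j * s * (fwdDiff (1 : ℤ))^[j] g y := by
  induction j with
  | zero =>
    intro y
    simpa using h y
  | succ j ih =>
    intro y
    rw [Function.iterate_succ_apply', fwdDiff, fwdDiff]
    have h1 := ih y
    have h2 := ih (y + 1)
    have e1 : c - y - ((j + 1 : ℕ) : ℤ) + 1 = c - y - j := by push_cast; ring
    have e2 : c - y - ((j + 1 : ℕ) : ℤ) = c - (y + 1) - j := by push_cast; ring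
    rw [e1, e2, h1, h2]
    ring

lemma main_aux (m j : ℕ) (hj : j ≤ m) : (Arefined (m + 1) (j + 1) : ℤ) =
    ∑ t ∈ Finset.range (2 * m - j + 1), ((2 * m - j).choose t : ℤ) *
      (-1) ^ (j + 1 + t + (m + 1)) * (Arefined (m + 1) (j + 1 + t) : ℤ) := by
  have h1 := fwdDiff_reflect (gfun m) (2 * m + 4) ((-1) ^ m) (FF_functional m) j 2
  have h2 := shift_eq_sum_fwdDiff_iter (1 : ℤ) ((fwdDiff (1 : ℤ))^[j] (gfun m)) (2 * m - j) 2
  have e : (2 : ℤ) + (2 * m - j) • (1 : ℤ) = 2 * m + 4 - 2 - j := by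
    rw [nsmul_eq_mul, Nat.cast_sub (by omega)]
    push_cast
    ring
  rw [e, h1] at h2
  have hs : ((-1 : ℤ) ^ m) * (-1) ^ m = 1 := by rw [← mul_pow]; simp
  have h3 : (-1 : ℤ) ^ j * (fwdDiff (1 : ℤ))^[j] (gfun m) 2 = (-1) ^ m *
      ((-1) ^ j * (-1) ^ m * (fwdDiff (1 : ℤ))^[j] (gfun m) 2) := by
    linear_combination (-((-1 : ℤ) ^ j * (fwdDiff (1 : ℤ))^[j] (gfun m) 2)) * hs
  rw [Arefined_eq, h3, h2, Finset.mul_sum]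
  refine Finset.sum_congr rfl fun t _ => ?_
  have e2 : j + 1 + t = t + j + 1 := by ring
  rw [e2, Arefined_eq, ← Function.iterate_add_apply, nsmul_eq_mul]
  have e3 : t + j + 1 + (m + 1) = (t + j) + m + 2 := by ring
  rw [e3, pow_add _ _ 2, pow_add _ (t + j) m]
  have hs2 : ((-1 : ℤ) ^ (t + j)) * (-1) ^ (t + j) = 1 := by rw [← mul_pow]; simp
  linear_combination (-(-1 : ℤ) ^ m * ((2 * m - j).choose t : ℤ) *
    (fwdDiff (1 : ℤ))^[t + j] (gfun m) 2) * hs2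

/-- The refined alternating sign matrix numbers satisfy the linear system
`A_{n,i} = ∑_{k=1}^{n} binom(2n-1-i, k-i) (-1)^{k+n} A_{n,k}` (with `binom(m, j) = 0`
for `j < 0`). -/
theorem refined_asm_linear_system (n : ℕ) (hn : 1 ≤ n) (i : ℕ)
    (hi1 : 1 ≤ i) (hi2 : i ≤ n) :
    (Arefined n i : ℤ) =
      ∑ k ∈ Finset.Icc 1 n,
        (if i ≤ k then ((2 * n - 1 - i).choose (k - i) : ℤ) else 0) *
          (-1 : ℤ) ^ (k + n) * (Arefined n k : ℤ) := by
  obtain ⟨m, rfl⟩ : ∃ m, n = m + 1 := ⟨n - 1, by omega⟩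
  obtain ⟨j, rfl⟩ : ∃ j, i = j + 1 := ⟨i - 1, by omega⟩
  have hj : j ≤ m := by omega
  have hN : 2 * (m + 1) - 1 - (j + 1) = 2 * m - j := by omega
  rw [main_aux m j hj, hN]
  rw [← Finset.sum_subset (s₁ := Finset.range (m - j + 1))
    (s₂ := Finset.range (2 * m - j + 1)) (by
    intro t ht
    rw [Finset.mem_range] at *
    omega)]
  · rw [← Finset.sum_subset (s₁ := Finset.Icc (j + 1) (m + 1))
      (s₂ := Finset.Icc 1 (m + 1)) (by
      intro t ht
      rw [Finset.mem_Icc] at *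
      omega)]
    · refine Finset.sum_nbij' (fun t => j + 1 + t) (fun k => k - (j + 1)) ?_ ?_ ?_ ?_ ?_
      · intro t ht
        rw [Finset.mem_range] at ht
        rw [Finset.mem_Icc]
        omega
      · intro t ht
        rw [Finset.mem_Icc] at ht
        rw [Finset.mem_range]
        omega
      · intro t _
        simp
      · intro t ht
        rw [Finset.mem_Icc] at ht
        show j + 1 + (t - (j + 1)) = t
        omega
      · intro t _
        rw [if_pos (by omega), Nat.add_sub_cancel_left]
    · intro k hk hk'
      rw [Finset.mem_Icc] at hk hk'
      rw [if_neg (by omega), zero_mul, zero_mul]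
  · intro t ht ht'
    rw [Finset.mem_range] at ht ht'
    rw [Arefined_zero _ _ (by omega)]
    simp
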